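/- (Corollary 3) Let f : 𝕋 → ℝ be continuous, even, with mean value zero, with Fourier coefficients satisfying f̂(k) > 0 for all k ≠ 0 and ∑_{k∈ℤ} f̂(k) < ∞, and let (x_n)_{n≥1} be a greedy sequence for f with initial points x_1, …, x_M. Then (x_n) is uniformly distributed on 𝕋: for every continuous g : 𝕋 → ℂ, (1/n)·∑_{m=1}^{n} g(x_m) converges to ∫₀¹ g(x) dx as n → ∞. -/

import Mathlib

open MeasureTheory Filter

lemma greedy_weyl (x : ℕ → UnitAddCircle)
    (h : ∀ k : ℤ, k ≠ 0 → Tendsto (fun n : ℕ => (1 / (n : ℂ)) *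
      ∑ m ∈ Finset.Icc 1 n, fourier k (x m)) atTop (nhds 0))
    (g : C(UnitAddCircle, ℂ)) :
    Tendsto (fun n : ℕ => (1 / (n : ℂ)) * ∑ m ∈ Finset.Icc 1 n, g (x m))
        atTop (nhds (∫ t : UnitAddCircle, g t)) := by
  have hint : ∀ p : C(UnitAddCircle, ℂ), Integrable (fun t => p t) (volume : Measure UnitAddCircle) := by
    intro p
    exact p.continuous.integrable_of_hasCompactSupport (HasCompactSupport.of_compactSpace _)
  have hspan : ∀ p ∈ Submodule.span ℂ (Set.range (@fourier (1:ℝ))),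
      Tendsto (fun n : ℕ => (1 / (n : ℂ)) * ∑ m ∈ Finset.Icc 1 n, p (x m))
        atTop (nhds (∫ t : UnitAddCircle, p t)) := by
    intro p hp
    induction hp using Submodule.span_induction with
    | mem p hp =>
      obtain ⟨k, rfl⟩ := hp
      by_cases hk : k = 0
      · subst hk
        have h1 : (∫ t : UnitAddCircle, (fourier 0 t : ℂ)) = 1 := by
          simp [Measure.real]
        rw [h1]
        apply tendsto_const_nhds.congr'
        filter_upwards [eventually_gt_atTop 0] with n hn
        have : (n : ℂ) ≠ 0 := by exact_mod_cast hn.ne'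
        simp [this]
      · have h1 : (∫ t : UnitAddCircle, (fourier k t : ℂ)) = 0 := by
          have hh := integral_eq_zero_of_add_right_eq_neg (μ := (volume : Measure UnitAddCircle))
            (fourier_add_half_inv_index hk one_pos)
          exact hh
        rw [h1]
        exact h k hk
    | zero => simp
    | add p q _ _ hp hq =>
      have := hp.add hq
      rw [← integral_add (hint p) (hint q)] at this
      refine this.congr fun n => ?_
      simp [Finset.sum_add_distrib, mul_add]
    | smul a p _ hp =>
      have := hp.const_mul a
      rw [← integral_const_mul] at this
      refine this.congr fun n => ?_
      simp only [ContinuousMap.smul_apply, smul_eq_mul, ← Finset.mul_sum]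
      ring
  have hA : ∀ (p : C(UnitAddCircle, ℂ)) (n : ℕ),
      ‖(1 / (n : ℂ)) * ∑ m ∈ Finset.Icc 1 n, p (x m)‖ ≤ ‖p‖ := by
    intro p n
    rcases Nat.eq_zero_or_pos n with rfl | hn
    · simp
    have h1 : ‖∑ m ∈ Finset.Icc 1 n, p (x m)‖ ≤ n * ‖p‖ := by
      refine (norm_sum_le_of_le _ fun m _ => p.norm_coe_le_norm (x m)).trans ?_
      simp
    have hn' : (0:ℝ) < n := by exact_mod_cast hn
    rw [norm_mul, norm_div, norm_one, Complex.norm_natCast, one_div, inv_mul_le_iff₀ hn']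
    exact h1
  have hI : ∀ (p : C(UnitAddCircle, ℂ)), ‖∫ t : UnitAddCircle, p t‖ ≤ ‖p‖ := by
    intro p
    have := norm_integral_le_of_norm_le_const (μ := (volume : Measure UnitAddCircle))
      (f := fun t => p t) (C := ‖p‖) (Eventually.of_forall fun t => p.norm_coe_le_norm t)
    simpa [Measure.real] using this
  have hg : g ∈ closure (Submodule.span ℂ (Set.range (@fourier (1:ℝ))) : Set C(UnitAddCircle, ℂ)) := by
    have := span_fourier_closure_eq_top (T := (1:ℝ))
    rw [← Submodule.topologicalClosure_coe, this]
    trivial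
  rw [Metric.tendsto_atTop]
  intro ε hε
  obtain ⟨p, hp, hgp⟩ := Metric.mem_closure_iff.1 hg (ε / 3) (by positivity)
  obtain ⟨N, hN⟩ := Metric.tendsto_atTop.1 (hspan p hp) (ε / 3) (by positivity)
  refine ⟨N, fun n hn => ?_⟩
  have h1 := hN n hn
  have h2 := hA (g - p) n
  have h3 := hI (g - p)
  simp only [ContinuousMap.sub_apply, Finset.sum_sub_distrib, mul_sub] at h2 h3
  rw [integral_sub (hint g) (hint p)] at h3
  rw [dist_eq_norm] at hgp
  rw [← dist_eq_norm] at h2 h3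
  rw [dist_comm] at h3
  have := dist_triangle4 ((1 / (n : ℂ)) * ∑ m ∈ Finset.Icc 1 n, g (x m))
    ((1 / (n : ℂ)) * ∑ m ∈ Finset.Icc 1 n, p (x m)) (∫ t : UnitAddCircle, p t)
    (∫ t : UnitAddCircle, g t)
  linarith

lemma greedy_energy
    (f : UnitAddCircle → ℝ) (hf_cont : Continuous f)
    (hf_mean : (∫ t : UnitAddCircle, f t) = 0)
    (hf_sum : Summable fun k : ℤ => ‖fourierCoeff (fun t => (f t : ℂ)) k‖)
    (hf_pos : ∀ k : ℤ, k ≠ 0 → 0 < (fourierCoeff (fun t => (f t : ℂ)) k).re)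
    (x : ℕ → UnitAddCircle) (k : ℤ) (s : Finset ℕ) :
    (fourierCoeff (fun t => (f t : ℂ)) k).re * ‖∑ m ∈ s, (fourier k (x m) : ℂ)‖ ^ 2 ≤
      ∑ i ∈ s, ∑ j ∈ s, f (x i - x j) := by
  let F : C(UnitAddCircle, ℂ) := ⟨fun t => (f t : ℂ), by fun_prop⟩
  have hs : Summable (fourierCoeff F) := hf_sum.of_norm
  have h1 := fun t => has_pointwise_sum_fourier_series_of_summable hs t
  have h2 : HasSum (fun l : ℤ => ∑ i ∈ s, ∑ j ∈ s,
      fourierCoeff F l • (fourier l (x i - x j) : ℂ)) (∑ i ∈ s, ∑ j ∈ s, F (x i - x j)) :=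
    hasSum_sum fun i _ => hasSum_sum fun j _ => h1 _
  have h3 : ∀ l : ℤ, ∑ i ∈ s, ∑ j ∈ s, fourierCoeff F l • (fourier l (x i - x j) : ℂ)
      = fourierCoeff F l * ((‖∑ m ∈ s, (fourier l (x m) : ℂ)‖ ^ 2 : ℝ) : ℂ) := by
    intro l
    rw [Complex.ofReal_pow, ← Complex.mul_conj', map_sum, Finset.sum_mul_sum, Finset.mul_sum]
    refine Finset.sum_congr rfl fun i _ => ?_
    rw [Finset.mul_sum]
    refine Finset.sum_congr rfl fun j _ => ?_
    rw [smul_eq_mul, ← fourier_neg, sub_eq_add_neg]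
    congr 1
    simp [fourier_apply, AddCircle.toCircle_add, smul_add]
  simp_rw [h3] at h2
  have h4 := Complex.hasSum_re h2
  have h5 : (∑ i ∈ s, ∑ j ∈ s, F (x i - x j)).re = ∑ i ∈ s, ∑ j ∈ s, f (x i - x j) := by
    simp [F]
  rw [h5] at h4
  simp only [Complex.re_mul_ofReal] at h4
  refine le_hasSum h4 k fun l _ => mul_nonneg ?_ (by positivity)
  by_cases hl : l = 0
  · subst hl
    have : fourierCoeff F 0 = 0 := by
      have hv : (AddCircle.haarAddCircle : Measure UnitAddCircle) = volume := by
        rw [AddCircle.volume_eq_smul_haarAddCircle]; simp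
      rw [fourierCoeff, hv]
      simp only [F, neg_zero, fourier_zero, one_smul, ContinuousMap.coe_mk]
      exact (integral_complex_ofReal (f := f)).trans (by rw [hf_mean]; simp)
    rw [this]; simp
  · exact (hf_pos l hl).le

/-- Corollary 3: For continuous even mean-zero `f : 𝕋 → ℝ` with summable
Fourier coefficients satisfying `f̂(k) > 0` for `k ≠ 0`, any greedy sequence `(x_n)` for
`f` is uniformly distributed on `𝕋`: for every continuous `g : 𝕋 → ℂ`,
`(1/n)·∑_{m=1}^{n} g(x_m) → ∫₀¹ g(x) dx`. -/
theorem greedy_uniformly_distributed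
    (f : UnitAddCircle → ℝ) (hf_cont : Continuous f)
    (hf_even : ∀ t : UnitAddCircle, f (-t) = f t)
    (hf_mean : (∫ t : UnitAddCircle, f t) = 0)
    (hf_sum : Summable fun k : ℤ => ‖fourierCoeff (fun t => (f t : ℂ)) k‖)
    (hf_pos : ∀ k : ℤ, k ≠ 0 → 0 < (fourierCoeff (fun t => (f t : ℂ)) k).re)
    (M : ℕ) (hM : 1 ≤ M) (x : ℕ → UnitAddCircle)
    (hgreedy : ∀ n : ℕ, M < n → ∀ y : UnitAddCircle,
      ∑ k ∈ Finset.Icc 1 (n - 1), f (x n - x k) ≤ ∑ k ∈ Finset.Icc 1 (n - 1), f (y - x k)) :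
    ∀ g : UnitAddCircle → ℂ, Continuous g →
      Tendsto (fun n : ℕ => (1 / (n : ℂ)) * ∑ m ∈ Finset.Icc 1 n, g (x m))
        atTop (nhds (∫ t : UnitAddCircle, g t)) := by
  intro g hg
  refine greedy_weyl x (fun k hk => ?_) ⟨g, hg⟩
  set E : ℕ → ℝ := fun n => ∑ i ∈ Finset.Icc 1 n, ∑ j ∈ Finset.Icc 1 n, f (x i - x j) with hE
  have hmin : ∀ n, M ≤ n → ∑ k ∈ Finset.Icc 1 n, f (x (n + 1) - x k) ≤ 0 := by
    intro n hn
    have h1 := hgreedy (n + 1) (by omega)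
    simp only [Nat.add_sub_cancel] at h1
    have hi : ∀ a : UnitAddCircle, Integrable (fun y => f (y - a)) volume := fun a =>
      (hf_cont.comp (continuous_sub_right a)).integrable_of_hasCompactSupport
        (HasCompactSupport.of_compactSpace _)
    have h2 := integral_mono (μ := (volume : Measure UnitAddCircle)) (integrable_const _)
      (integrable_finsetSum (Finset.Icc 1 n) fun k _ => hi (x k)) h1
    rw [integral_finsetSum _ fun k _ => hi (x k)] at h2
    simp only [integral_sub_right_eq_self (μ := (volume : Measure UnitAddCircle)) f, hf_mean] at h2
    simpa [Measure.real] using h2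
  have hstep : ∀ n, M ≤ n → E (n + 1) ≤ E n + f 0 := by
    intro n hn
    have h1 := hmin n hn
    have h2 : ∑ i ∈ Finset.Icc 1 n, f (x i - x (n + 1)) =
        ∑ k ∈ Finset.Icc 1 n, f (x (n + 1) - x k) :=
      Finset.sum_congr rfl fun i _ => by rw [← hf_even, neg_sub]
    simp only [hE, Finset.sum_Icc_succ_top (Nat.le_add_left 1 n), Finset.sum_add_distrib, h2, sub_self]
    linarith
  have hbound : ∀ n, E (M + n) ≤ E M + n * f 0 := by
    intro n
    induction n with
    | zero => simp
    | succ n ih =>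
      have := hstep (M + n) (by omega)
      rw [← add_assoc]
      push_cast
      linarith
  obtain ⟨C, hC0, hC⟩ : ∃ C : ℝ, 0 ≤ C ∧ ∀ n, M ≤ n → E n ≤ C * n := by
    refine ⟨|E M| + |f 0|, by positivity, fun n hn => ?_⟩
    obtain ⟨d, rfl⟩ := Nat.exists_eq_add_of_le hn
    have h1 := hbound d
    have h2 := le_abs_self (E M)
    have h3 := le_abs_self (f 0)
    have hM' : (1:ℝ) ≤ M := by exact_mod_cast hM
    have hd : (0:ℝ) ≤ d := Nat.cast_nonneg d
    have h4 := abs_nonneg (E M)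
    have h5 := abs_nonneg (f 0)
    push_cast
    nlinarith [mul_nonneg hd h4, mul_nonneg hd h5, mul_nonneg (sub_nonneg.2 hM') h4,
      mul_nonneg (sub_nonneg.2 hM') h5, mul_nonneg hd (sub_nonneg.2 h3)]
  set c := (fourierCoeff (fun t => (f t : ℂ)) k).re with hc
  have hcpos : 0 < c := hf_pos k hk
  have hlim : Tendsto (fun n : ℕ => Real.sqrt (C / c * (1 / (n:ℝ)))) atTop (nhds 0) := by
    have := ((tendsto_one_div_atTop_nhds_zero_nat (𝕜 := ℝ)).const_mul (C / c)).sqrt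
    simpa using this
  refine squeeze_zero_norm' ?_ hlim
  filter_upwards [eventually_ge_atTop M] with n hn
  have hn0 : (0:ℝ) < n := by exact_mod_cast (by omega : 0 < n)
  apply Real.le_sqrt_of_sq_le
  have h1 := (greedy_energy f hf_cont hf_mean hf_sum hf_pos x k (Finset.Icc 1 n)).trans (hC n hn)
  rw [norm_mul, norm_div, norm_one, Complex.norm_natCast, mul_pow]
  rw [← hc] at h1
  have h2 : ‖∑ m ∈ Finset.Icc 1 n, (fourier k (x m) : ℂ)‖ ^ 2 ≤ C * n / c := by
    rw [le_div_iff₀ hcpos]; linarith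
  calc _ ≤ (1 / (n:ℝ)) ^ 2 * (C * n / c) := by gcongr
    _ = _ := by field_simp
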